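/- For every integer ℓ ≥ 0, let g_ℓ denote the number of isomorphism classes of finite graphs with exactly ℓ edges and no isolated vertices. Then for every non-empty family 𝓕 of finite graphs, each having at least one edge, and every integer m ≥ 0, the set {n ∈ ℤ_{≥0} : sat(n,𝓕) = m} is the union of at most 2·(g_0 + g_1 + ⋯ + g_m) intervals. -/

import Mathlib

open SimpleGraph Filter Topology

/-- `H` (on `β`) is contained in `G` (on `α`): `G` has a subgraph isomorphic to `H`. -/
def Contains {α β : Type*} (G : SimpleGraph α) (H : SimpleGraph β) : Prop :=
  ∃ f : β ↪ α, ∀ a b : β, H.Adj a b → G.Adj (f a) (f b)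

/-- A family of finite graphs, each given on a vertex set `Fin n`. -/
abbrev GraphFam := Set ((n : ℕ) × SimpleGraph (Fin n))

/-- `G` is `𝓕`-saturated: `G` contains no member of `𝓕`, but adding any missing edge to `G`
creates a member of `𝓕`. -/
def FamSaturated (𝓕 : GraphFam) {α : Type*} (G : SimpleGraph α) : Prop :=
  (∀ F ∈ 𝓕, ¬ Contains G F.2) ∧
    ∀ u v : α, u ≠ v → ¬ G.Adj u v →
      ∃ F ∈ 𝓕, Contains (G ⊔ SimpleGraph.fromEdgeSet {s(u, v)}) F.2

/-- `sat n 𝓕` is the minimum number of edges in an `𝓕`-saturated graph on `n` vertices. -/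
noncomputable def sat (n : ℕ) (𝓕 : GraphFam) : ℕ :=
  sInf {m | ∃ G : SimpleGraph (Fin n), FamSaturated 𝓕 G ∧ Nat.card G.edgeSet = m}

/-- An interval of non-negative integers. -/
def IsIntervalN (I : Set ℕ) : Prop := ∀ a b c : ℕ, a ≤ b → b ≤ c → a ∈ I → c ∈ I → b ∈ I

/-- `numClasses ℓ` is the number of isomorphism classes of finite graphs with exactly `ℓ` edges
and no isolated vertices. -/
noncomputable def numClasses (ℓ : ℕ) : ℕ :=
  Nat.card (Quot (fun (G H : {G : (n : ℕ) × SimpleGraph (Fin n) //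
      Nat.card G.2.edgeSet = ℓ ∧ ∀ v, (G.2.neighborSet v).Nonempty}) =>
    Nonempty (G.1.2 ≃g H.1.2)))

/-!
A graph with `ℓ` edges is a core without isolated vertices, one of `g_ℓ` up to isomorphism, plus
isolated vertices. Fix a core on `h` vertices and consider the orders at which its extension by
isolated vertices is saturated. Freeness passes to smaller orders. The saturation condition passes
to larger orders once there are two isolated vertices, because every pair of vertices of the larger
graph already occurs, together with the core, in the smaller one. So the orders `≥ h + 2` form an
interval, and the remaining ones lie in `{h, h + 1}`: each core contributes two intervals. Finally,
`sat n 𝓕 = m` says that `n` lies in one of the `2 g_m` intervals for `m` and in none of the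
`2 (g_0 + ⋯ + g_{m-1})` intervals for fewer edges, and removing `q` intervals from a union of `p`
intervals of natural numbers leaves at most `p + q` of them.
-/

section IntervalUnions

/-- The set `s` is a union of order-connected sets, i.e. intervals, indexed by `ι`. The index type
bounds the number of intervals; some of them may be empty or overlap. -/
def IsIntervalUnion {α : Type*} [Preorder α] (ι : Type*) (s : Set α) : Prop :=
  ∃ f : ι → Set α, (∀ i, (f i).OrdConnected) ∧ s = ⋃ i, f i

theorem isIntervalN_iff_ordConnected {I : Set ℕ} : IsIntervalN I ↔ I.OrdConnected :=
  ⟨fun h => ⟨fun a ha c hc b hb => h a b c hb.1 hb.2 ha hc⟩,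
    fun h _ _ _ hab hbc ha hc => h.out ha hc ⟨hab, hbc⟩⟩

namespace IsIntervalUnion

section Preorder

variable {α ι : Type*} [Preorder α]

theorem of_ordConnected_union {s t : Set α} (hs : s.OrdConnected) (ht : t.OrdConnected) :
    IsIntervalUnion Bool (s ∪ t) :=
  ⟨fun b => cond b s t, Bool.rec ht hs, Set.union_eq_iUnion⟩

theorem iUnion {κ : ι → Type*} {s : ι → Set α} (h : ∀ i, IsIntervalUnion (κ i) (s i)) :
    IsIntervalUnion (Σ i, κ i) (⋃ i, s i) := by
  choose f hf hs using h
  exact ⟨fun p => f p.1 p.2, fun p => hf p.1 p.2, by simp only [hs, Set.iUnion_sigma]⟩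

theorem of_surjective {κ : Type*} {s : Set α} (h : IsIntervalUnion ι s) {e : κ → ι}
    (he : Function.Surjective e) : IsIntervalUnion κ s := by
  obtain ⟨f, hf, rfl⟩ := h
  exact ⟨f ∘ e, fun k => hf (e k), (he.iUnion_comp f).symm⟩

end Preorder

theorem of_left_endpoints {α ι : Type*} [LinearOrder α] [WellFoundedLT α] {s : Set α} (P : ι → α)
    (hP : ∀ a ∈ s, (∀ b < a, ¬ Set.Icc b a ⊆ s) → a ∈ Set.range P) : IsIntervalUnion ι s := by
  refine ⟨fun i => s.ordConnectedComponent (P i), fun i => inferInstance,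
    Set.Subset.antisymm (fun x hx => ?_)
      (Set.iUnion_subset fun i => Set.ordConnectedComponent_subset)⟩
  obtain ⟨a, hax, hmin⟩ :=
    WellFounded.has_min wellFounded_lt _ (Set.nonempty_ordConnectedComponent.2 hx)
  have hstart : ∀ b < a, ¬ Set.Icc b a ⊆ s := fun b hba hsub =>
    hmin b (Set.mem_ordConnectedComponent_trans hax
      (by rwa [Set.mem_ordConnectedComponent, Set.uIcc_of_ge hba.le])) hba
  obtain ⟨i, rfl⟩ := hP a (Set.ordConnectedComponent_subset hax) hstart
  exact Set.mem_iUnion_of_mem i (Set.mem_ordConnectedComponent_comm.1 hax)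

/-- A component of the difference starts where one of the intervals of `s` starts or right after
one of the intervals of `t` ends. -/
theorem diff {ι κ : Type*} {s t : Set ℕ} (hs : IsIntervalUnion ι s) (ht : IsIntervalUnion κ t) :
    IsIntervalUnion (ι ⊕ κ) (s \ t) := by
  obtain ⟨I, hI, rfl⟩ := hs
  obtain ⟨J, hJ, rfl⟩ := ht
  refine of_left_endpoints (Sum.elim (fun i => sInf (I i)) fun j => sSup (J j) + 1) ?_
  rintro a ⟨haI, haJ⟩ hstart
  obtain ⟨i, hi⟩ := Set.mem_iUnion.1 haI
  obtain hinf | hinf := (Nat.sInf_le hi).eq_or_lt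
  · exact ⟨Sum.inl i, hinf⟩
  obtain ⟨b, rfl⟩ := Nat.exists_eq_succ_of_ne_zero (Nat.ne_zero_of_lt hinf)
  have hbI : b ∈ ⋃ i, I i := Set.mem_iUnion_of_mem i <|
    (hI i).out (Nat.sInf_mem ⟨_, hi⟩) hi ⟨Nat.le_of_lt_succ hinf, b.le_succ⟩
  have hbJ : b ∈ ⋃ j, J j := by
    by_contra hbJ
    refine hstart b b.lt_succ_self fun x hx => ?_
    obtain rfl | rfl : x = b ∨ x = b + 1 := by grind
    exacts [⟨hbI, hbJ⟩, ⟨haI, haJ⟩]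
  obtain ⟨j, hj⟩ := Set.mem_iUnion.1 hbJ
  have hgreatest : IsGreatest (J j) b := ⟨hj, fun x hx => not_lt.1 fun hbx =>
    haJ (Set.mem_iUnion_of_mem j ((hJ j).out hj hx ⟨b.le_succ, hbx⟩))⟩
  exact ⟨Sum.inr j, congrArg Nat.succ hgreatest.csSup_eq⟩

end IsIntervalUnion

end IntervalUnions

section Embeddings

variable {V α β : Type*}

theorem exists_embedding_comp_eq [Finite V] (f : V ↪ α) (g : V ↪ β) (e : α ↪ β) :
    ∃ φ : α ↪ β, φ ∘ f = g := by
  obtain ⟨σ, hσ⟩ := Equiv.Perm.exists_extending_pair (e ∘ f) g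
    (e.injective.comp f.injective) g.injective
  exact ⟨e.trans σ.toEmbedding, funext hσ⟩

theorem exists_embedding_comp_eq_of_range_subset [Finite α] (f : V ↪ α) (g : V ↪ β)
    (e : α ↪ β) {T : Finset β} (hgT : Set.range g ⊆ T) (hT : T.card ≤ Nat.card α) :
    ∃ φ : α ↪ β, φ ∘ f = g ∧ (T : Set β) ⊆ Set.range φ := by
  have := Fintype.ofFinite α
  have := Finite.of_injective f f.injective
  obtain ⟨i⟩ : Nonempty (T ↪ α) :=
    Function.Embedding.nonempty_of_card_le (by simpa using hT)
  obtain ⟨k, hk⟩ := exists_embedding_comp_eq (g.codRestrict (T : Set β) fun v => hgT ⟨v, rfl⟩) f i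
  obtain ⟨φ, hφ⟩ := exists_embedding_comp_eq k (Function.Embedding.subtype (· ∈ T)) e
  refine ⟨φ, funext fun v => ?_, fun t ht => ⟨k ⟨t, ht⟩, congrFun hφ ⟨t, ht⟩⟩⟩
  rw [← hk]
  exact congrFun hφ ⟨g v, hgT ⟨v, rfl⟩⟩

end Embeddings

section Graphs

variable {V W α β : Type*}

theorem map_sup_edge (G : SimpleGraph α) (φ : α ↪ β) (x y : α) :
    (G ⊔ edge x y).map φ = G.map φ ⊔ edge (φ x) (φ y) := by
  ext u v
  simp only [map_adj, sup_adj, edge_adj]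
  constructor
  · rintro ⟨a, b, hab | ⟨hab, hne⟩, rfl, rfl⟩
    · exact .inl ⟨a, b, hab, rfl, rfl⟩
    · exact .inr ⟨by grind, φ.injective.ne hne⟩
  · rintro (⟨a, b, hab, rfl, rfl⟩ | ⟨⟨rfl, rfl⟩ | ⟨rfl, rfl⟩, hne⟩)
    · exact ⟨a, b, .inl hab, rfl, rfl⟩
    · exact ⟨x, y, .inr ⟨by simp, ne_of_apply_ne φ hne⟩, rfl, rfl⟩
    · exact ⟨y, x, .inr ⟨by simp, ne_of_apply_ne φ hne⟩, rfl, rfl⟩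

theorem map_iso_symm {H : SimpleGraph V} {K : SimpleGraph W} (e : H ≃g K) : K.map e.symm = H := by
  rw [show K.map e.symm = K.comap e from map_symm K e.toEquiv]
  ext
  exact e.map_adj_iff

theorem natCard_edgeSet_map (G : SimpleGraph α) (f : α ↪ β) :
    Nat.card (G.map f).edgeSet = Nat.card G.edgeSet := by
  rw [edgeSet_map]
  exact Nat.card_image_of_injective f.sym2Map.injective _

theorem natCard_le_two_mul_natCard_edgeSet [Finite V] (G : SimpleGraph V)
    (hG : ∀ v, (G.neighborSet v).Nonempty) : Nat.card V ≤ 2 * Nat.card G.edgeSet := by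
  classical
  have := Fintype.ofFinite V
  have hdeg : ∀ v ∈ Finset.univ, 1 ≤ G.degree v := fun v _ =>
    (G.degree_pos_iff_exists_adj v).2 (hG v)
  calc Nat.card V = ∑ _v : V, 1 := by simp
    _ ≤ ∑ v, G.degree v := Finset.sum_le_sum hdeg
    _ = 2 * Nat.card G.edgeSet := by
      rw [G.sum_degrees_eq_twice_card_edges, edgeFinset_card, Nat.card_eq_fintype_card]

theorem neighborSet_induce_support_nonempty (G : SimpleGraph V) (v : G.support) :
    ((G.induce G.support).neighborSet v).Nonempty :=
  let ⟨w, hvw⟩ := v.2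
  ⟨⟨w, hvw.right_mem_support⟩, hvw⟩

end Graphs

section Saturation

variable {V W α β γ : Type*} {𝓕 : GraphFam}

theorem contains_iff_isContained {G : SimpleGraph α} {H : SimpleGraph β} :
    Contains G H ↔ H ⊑ G :=
  ⟨fun ⟨f, hf⟩ => ⟨⟨⟨f, fun {a b} => hf a b⟩, f.injective⟩⟩,
    fun ⟨c⟩ => ⟨c.toEmbedding, fun _ _ hab => c.toHom.map_adj hab⟩⟩

/-- `G` contains no member of `𝓕`: the first half of the definition of a saturated graph. -/
def FamFree (𝓕 : GraphFam) (G : SimpleGraph α) : Prop :=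
  ∀ F ∈ 𝓕, ¬ Contains G F.2

theorem FamFree.of_isContained {G : SimpleGraph α} {G' : SimpleGraph β} (h : FamFree 𝓕 G')
    (hG : G ⊑ G') : FamFree 𝓕 G := fun F hF hc =>
  h F hF (contains_iff_isContained.2 ((contains_iff_isContained.1 hc).trans hG))

theorem famFree_bot (h𝓕 : ∀ F ∈ 𝓕, F.2 ≠ ⊥) : FamFree 𝓕 (⊥ : SimpleGraph α) := by
  rintro F hF ⟨_, hf⟩
  exact h𝓕 F hF (eq_bot_iff_forall_not_adj.2 hf)

theorem famSaturated_iff {G : SimpleGraph α} :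
    FamSaturated 𝓕 G ↔
      FamFree 𝓕 G ∧ ∀ u v, u ≠ v → ¬ G.Adj u v → ¬ FamFree 𝓕 (G ⊔ edge u v) := by
  simp only [FamSaturated, FamFree, edge, not_forall, not_not, exists_prop]

theorem famSaturated_of_maximal {G : SimpleGraph α} (hG : Maximal (FamFree 𝓕) G) :
    FamSaturated 𝓕 G :=
  famSaturated_iff.2 ⟨hG.prop, fun _ _ huv hadj hfree =>
    (lt_sup_edge G _ _ huv hadj).not_ge (hG.le_of_ge hfree le_sup_left)⟩

theorem exists_famSaturated [Finite α] (h𝓕 : ∀ F ∈ 𝓕, F.2 ≠ ⊥) :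
    ∃ G : SimpleGraph α, FamSaturated 𝓕 G :=
  (Set.Finite.exists_maximal (Set.toFinite {G | FamFree 𝓕 G}) ⟨⊥, famFree_bot h𝓕⟩).imp
    fun _ => famSaturated_of_maximal

theorem FamFree.map_of_embedding [Finite V] {H : SimpleGraph V} {g : V ↪ β}
    (h : FamFree 𝓕 (H.map g)) (f : V ↪ α) (e : α ↪ β) : FamFree 𝓕 (H.map f) := by
  obtain ⟨φ, hφ⟩ := exists_embedding_comp_eq f g e
  refine h.of_isContained ?_
  rw [← hφ, ← SimpleGraph.map_map]
  exact (Embedding.map φ (H.map f)).isContained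

theorem FamSaturated.not_famFree_map_sup_edge [Finite α] {H : SimpleGraph V} {f : V ↪ α}
    (h : FamSaturated 𝓕 (H.map f)) (hcard : Nat.card V + 2 ≤ Nat.card α) (g : V ↪ β) (e : α ↪ β)
    {u v : β} (huv : u ≠ v) (hadj : ¬ (H.map g).Adj u v) :
    ¬ FamFree 𝓕 (H.map g ⊔ edge u v) := by
  classical
  have := Finite.of_injective f f.injective
  have := Fintype.ofFinite V
  let T : Finset β := insert u (insert v (Finset.univ.map g))
  have hT : T.card ≤ Nat.card α := calc
    T.card ≤ (Finset.univ.map g).card + 1 + 1 :=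
      (Finset.card_insert_le _ _).trans (Nat.succ_le_succ (Finset.card_insert_le _ _))
    _ ≤ Nat.card α := by
      simpa only [Finset.card_map, Finset.card_univ, Nat.card_eq_fintype_card] using hcard
  obtain ⟨φ, hφ, hTφ⟩ :=
    exists_embedding_comp_eq_of_range_subset f g e (T := T) (by simp [T, Set.subset_def]) hT
  obtain ⟨x, rfl⟩ := hTφ (show u ∈ T by simp [T])
  obtain ⟨y, rfl⟩ := hTφ (show v ∈ T by simp [T])
  rw [← hφ, ← SimpleGraph.map_map] at hadj ⊢
  rw [← map_sup_edge]
  exact fun hfree => (famSaturated_iff.1 h).2 x y (ne_of_apply_ne φ huv)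
    (fun hxy => hadj (map_adj_apply.2 hxy))
    (hfree.of_isContained (Embedding.map φ _).isContained)

theorem FamSaturated.map_of_between [Finite α] {H : SimpleGraph V} {f : V ↪ α} {k : V ↪ γ}
    (hf : FamSaturated 𝓕 (H.map f)) (hk : FamSaturated 𝓕 (H.map k))
    (hcard : Nat.card V + 2 ≤ Nat.card α) (e : α ↪ β) (e' : β ↪ γ) (g : V ↪ β) :
    FamSaturated 𝓕 (H.map g) :=
  have := Finite.of_injective f f.injective
  famSaturated_iff.2 ⟨(famSaturated_iff.1 hk).1.map_of_embedding g e',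
    fun _ _ => hf.not_famFree_map_sup_edge hcard g e⟩

/-- The orders `n` for which `H` together with isolated vertices up to a total of `n` vertices is
`𝓕`-saturated. -/
def satOrders (𝓕 : GraphFam) (H : SimpleGraph V) : Set ℕ :=
  {n | ∃ f : V ↪ Fin n, FamSaturated 𝓕 (H.map f)}

theorem satOrders_subset_Ici (𝓕 : GraphFam) (H : SimpleGraph V) :
    satOrders 𝓕 H ⊆ Set.Ici (Nat.card V) := fun _ ⟨f, _⟩ => by
  simpa using Finite.card_le_of_embedding f

theorem ordConnected_satOrders_inter_Ici (𝓕 : GraphFam) (H : SimpleGraph V) :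
    (satOrders 𝓕 H ∩ Set.Ici (Nat.card V + 2)).OrdConnected := by
  refine ⟨?_⟩
  rintro a ⟨⟨f, hf⟩, ha⟩ c ⟨⟨k, hk⟩, -⟩ b ⟨hab, hbc⟩
  exact ⟨⟨f.trans (Fin.castLEEmb hab), hf.map_of_between hk (by simpa using ha)
    (Fin.castLEEmb hab) (Fin.castLEEmb hbc) _⟩, le_trans ha hab⟩

theorem ordConnected_satOrders_inter_Iio (𝓕 : GraphFam) (H : SimpleGraph V) :
    (satOrders 𝓕 H ∩ Set.Iio (Nat.card V + 2)).OrdConnected := by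
  refine ⟨?_⟩
  rintro a ⟨ha, -⟩ c ⟨hc, hc'⟩ b ⟨hab, hbc⟩
  have hVa : Nat.card V ≤ a := satOrders_subset_Ici 𝓕 H ha
  obtain rfl | rfl : b = a ∨ b = c := by grind
  exacts [⟨ha, hbc.trans_lt hc'⟩, ⟨hc, hc'⟩]

theorem isIntervalUnion_satOrders (𝓕 : GraphFam) (H : SimpleGraph V) :
    IsIntervalUnion Bool (satOrders 𝓕 H) := by
  simpa only [← Set.inter_union_distrib_left, Set.Iio_union_Ici, Set.inter_univ] using
    IsIntervalUnion.of_ordConnected_union (ordConnected_satOrders_inter_Iio 𝓕 H)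
      (ordConnected_satOrders_inter_Ici 𝓕 H)

theorem satOrders_subset_of_iso {H : SimpleGraph V} {K : SimpleGraph W} (e : H ≃g K) :
    satOrders 𝓕 H ⊆ satOrders 𝓕 K := fun n ⟨f, hf⟩ =>
  ⟨e.symm.toEmbedding.toEmbedding.trans f, by
    rwa [← map_iso_symm e, SimpleGraph.map_map] at hf⟩

theorem satOrders_congr {H : SimpleGraph V} {K : SimpleGraph W} (e : H ≃g K) :
    satOrders 𝓕 H = satOrders 𝓕 K :=
  (satOrders_subset_of_iso e).antisymm (satOrders_subset_of_iso e.symm)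

end Saturation

section Cores

/-- Finite graphs with exactly `ℓ` edges and no isolated vertices, in the encoding used by
`numClasses`. -/
abbrev CoreGraph (ℓ : ℕ) : Type :=
  {G : (n : ℕ) × SimpleGraph (Fin n) //
    Nat.card G.2.edgeSet = ℓ ∧ ∀ v, (G.2.neighborSet v).Nonempty}

/-- Isomorphism classes of finite graphs with exactly `ℓ` edges and no isolated vertices, so that
`numClasses ℓ` is by definition their number. -/
abbrev CoreClass (ℓ : ℕ) : Type :=
  Quot fun G H : CoreGraph ℓ => Nonempty (G.1.2 ≃g H.1.2)

instance finite_coreGraph (ℓ : ℕ) : Finite (CoreGraph ℓ) := by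
  have hlt (G : CoreGraph ℓ) : G.1.1 < 2 * ℓ + 1 := by
    simpa [G.2.1, Nat.lt_succ_iff] using natCard_le_two_mul_natCard_edgeSet G.1.2 G.2.2
  refine Finite.of_injective (β := (n : Fin (2 * ℓ + 1)) × SimpleGraph (Fin n))
    (fun G => ⟨⟨G.1.1, hlt G⟩, G.1.2⟩) ?_
  rintro ⟨⟨n, G⟩, hG⟩ ⟨⟨k, K⟩, hK⟩ hGK
  exact Subtype.ext (by simpa using hGK)

theorem exists_coreGraph_map_eq {V : Type*} [Finite V] (G : SimpleGraph V) :
    ∃ (C : CoreGraph (Nat.card G.edgeSet)) (f : Fin C.1.1 ↪ V), C.1.2.map f = G := by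
  have := Fintype.ofFinite G.support
  let H := G.induce G.support
  let e : H ≃g H.overFin rfl := H.overFinIso rfl
  let f := e.symm.toEquiv.toEmbedding.trans (Function.Embedding.subtype _)
  have hf : (H.overFin rfl).map f = G := calc
    (H.overFin rfl).map f = ((H.overFin rfl).map e.symm).map Subtype.val :=
      (SimpleGraph.map_map (H.overFin rfl) e.symm Subtype.val).symm
    _ = G := by rw [map_iso_symm]; exact G.spanningCoe_induce_support
  refine ⟨⟨⟨_, H.overFin rfl⟩, ?_, fun v => ?_⟩, f, hf⟩
  · rw [← natCard_edgeSet_map _ f, hf]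
  · obtain ⟨w, hw⟩ := neighborSet_induce_support_nonempty G (e.symm v)
    exact ⟨e w, e.symm.map_adj_iff.1 (by rwa [e.symm_apply_apply])⟩

/-- `satOrders` of the members of an isomorphism class of cores. -/
def CoreClass.satOrders (𝓕 : GraphFam) {ℓ : ℕ} : CoreClass ℓ → Set ℕ :=
  Quot.lift (fun C => _root_.satOrders 𝓕 C.1.2) fun _ _ ⟨e⟩ => satOrders_congr e

/-- The orders of the `𝓕`-saturated graphs with exactly `ℓ` edges. -/
def satOrdersOfSize (𝓕 : GraphFam) (ℓ : ℕ) : Set ℕ :=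
  {n | ∃ G : SimpleGraph (Fin n), FamSaturated 𝓕 G ∧ Nat.card G.edgeSet = ℓ}

theorem satOrdersOfSize_eq_iUnion (𝓕 : GraphFam) (ℓ : ℕ) :
    satOrdersOfSize 𝓕 ℓ = ⋃ q : CoreClass ℓ, q.satOrders 𝓕 := by
  ext n
  rw [Set.mem_iUnion, Quot.mk_surjective.exists]
  constructor
  · rintro ⟨G, hG, rfl⟩
    obtain ⟨C, f, hf⟩ := exists_coreGraph_map_eq G
    exact ⟨C, f, hf.symm ▸ hG⟩
  · rintro ⟨C, f, hf⟩
    exact ⟨_, hf, (natCard_edgeSet_map _ f).trans C.2.1⟩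

theorem isIntervalUnion_satOrdersOfSize (𝓕 : GraphFam) (ℓ : ℕ) :
    IsIntervalUnion (Σ _ : CoreClass ℓ, Bool) (satOrdersOfSize 𝓕 ℓ) := by
  rw [satOrdersOfSize_eq_iUnion]
  exact .iUnion (Quot.ind fun C => isIntervalUnion_satOrders 𝓕 C.1.2)

theorem card_coreClass_sigma_bool (ℓ : ℕ) :
    Nat.card (Σ _ : CoreClass ℓ, Bool) = 2 * numClasses ℓ := by
  rw [Nat.card_congr (Equiv.sigmaEquivProd _ _), Nat.card_prod, mul_comm,
    Nat.card_eq_fintype_card (α := Bool), Fintype.card_bool, numClasses]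

theorem setOf_sat_eq {𝓕 : GraphFam} (h𝓕 : ∀ F ∈ 𝓕, F.2 ≠ ⊥) (m : ℕ) :
    {n | sat n 𝓕 = m} = satOrdersOfSize 𝓕 m \ ⋃ ℓ : Fin m, satOrdersOfSize 𝓕 ℓ := by
  ext n
  obtain ⟨G, hG⟩ := exists_famSaturated (α := Fin n) h𝓕
  have hleast : IsLeast {ℓ | n ∈ satOrdersOfSize 𝓕 ℓ} (sat n 𝓕) :=
    ⟨Nat.sInf_mem ⟨_, G, hG, rfl⟩, fun _ => Nat.sInf_le⟩
  simp only [Set.mem_ofPred_eq, Set.mem_sdiff, Set.mem_iUnion, not_exists]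
  constructor
  · rintro rfl
    exact ⟨hleast.1, fun ℓ hℓ => ℓ.2.not_ge (hleast.2 hℓ)⟩
  · rintro ⟨hm, hlt⟩
    exact (hleast.2 hm).eq_of_not_lt fun hsat => hlt ⟨_, hsat⟩ hleast.1

end Cores

/-- For every non-empty family `𝓕` of graphs each having at least one edge and every `m`,
the set `{n : sat(n,𝓕) = m}` is the union of at most `2·(g_0 + ⋯ + g_m)` intervals, where
`g_ℓ` is the number of isomorphism classes of graphs with `ℓ` edges and no isolated vertices. -/
theorem stmt3 (𝓕 : GraphFam) (h1 : 𝓕.Nonempty) (h2 : ∀ F ∈ 𝓕, 1 ≤ Nat.card F.2.edgeSet)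
    (m : ℕ) :
    ∃ f : Fin (2 * ∑ ℓ ∈ Finset.range (m + 1), numClasses ℓ) → Set ℕ,
      (∀ i, IsIntervalN (f i)) ∧ {n : ℕ | sat n 𝓕 = m} = ⋃ i, f i := by
  have h𝓕 : ∀ F ∈ 𝓕, F.2 ≠ ⊥ := fun F hF hbot => by simpa [hbot] using h2 F hF
  have hunion : IsIntervalUnion _ {n | sat n 𝓕 = m} := setOf_sat_eq h𝓕 m ▸
    (isIntervalUnion_satOrdersOfSize 𝓕 m).diff
      (.iUnion fun ℓ : Fin m => isIntervalUnion_satOrdersOfSize 𝓕 ℓ)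
  have hcard : Nat.card ((Σ _ : CoreClass m, Bool) ⊕ Σ ℓ : Fin m, Σ _ : CoreClass ℓ, Bool) =
      2 * ∑ ℓ ∈ Finset.range (m + 1), numClasses ℓ := by
    rw [Nat.card_sum, Nat.card_sigma (α := Fin m), Finset.sum_range_succ_comm, mul_add,
      Finset.mul_sum, ← Fin.sum_univ_eq_sum_range (fun ℓ => 2 * numClasses ℓ)]
    simp only [card_coreClass_sigma_bool]
  simp only [isIntervalN_iff_ordConnected]
  exact hunion.of_surjective (Finite.equivFinOfCardEq hcard).symm.surjective
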